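/- arXiv:2510.00616 — 3 statements merged into one kernel-verified Lean document; each statement's English description precedes it below -/
import Mathlib

section
/- For all nonnegative integers m and n and every rational number x, writing A_j(x) := ((x+1)^j + (x−1)^j)/2, one has x^(2n)·A_m(x) + A_{m+2n}(x) = Σ_{k=0}^{n} C(2n−k, k) · x^k · A_{m+k}(x) + Σ_{k=1}^{n} C(2n−k−1, k−1) · x^k · A_{m+k}(x) + (A_m(x) if n = 0 else 0). (The extra term for n = 0 encodes the convention C(−1,−1) = 1 used in the paper's formulation, in which the coefficient of x^k A_{m+k}(x) is C(2n−k, k) + C(2n−k−1, k−1).) -/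
/-- `A j x = ((x + 1)^j + (x - 1)^j) / 2`. -/
def A (j : ℕ) (x : ℚ) : ℚ := ((x + 1) ^ j + (x - 1) ^ j) / 2

/-!
`A · x` solves the recurrence `u (j + 2) = 2 * x * u (j + 1) + (1 - x ^ 2) * u j`, that is,
`(E - x) ^ 2 u = u` for the shift `E`, and this is all that matters. With `t = xE`, both sides of
the identity satisfy `a (n + 2) = (1 + 2t) a (n + 1) - t ^ 2 a n`. For the binomial sums this is
the Fibonacci recurrence `F (N + 2) = F (N + 1) + t F N`, coming from Pascal's rule, taken two
steps at a time. For `x ^ (2 * n) + E ^ (2 * n)` it says that `x ^ 2` and `E ^ 2` have product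
`t ^ 2` and sum `(E - x) ^ 2 + 2t = 1 + 2t`.
-/

open Finset

section CommSemiring

variable {R : Type*} [CommSemiring R] (x : R) (u : ℕ → R)

/-- The sum `∑ C(N - k, k) x ^ k u (m + k)` along a shallow diagonal of Pascal's triangle: the
Fibonacci polynomial `∑ C(N - k, k) t ^ k` at `t = xE`, with `E` the shift, applied to `u` and
evaluated at `m`. Summing over the pairs `(k, N - k)` avoids truncated subtraction. -/
def fibSum (N m : ℕ) : R :=
  ∑ p ∈ antidiagonal N, (p.2.choose p.1 : R) * x ^ p.1 * u (m + p.1)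

lemma fibSum_eq_sum_range (N m : ℕ) :
    fibSum x u N m = ∑ k ∈ range (N / 2 + 1), ((N - k).choose k : R) * x ^ k * u (m + k) := by
  rw [fibSum, Nat.sum_antidiagonal_eq_sum_range_succ_mk]
  refine (sum_subset (range_mono (by omega)) fun k _ hk ↦ ?_).symm
  rw [mem_range] at hk
  rw [Nat.choose_eq_zero_of_lt (by omega), Nat.cast_zero, zero_mul, zero_mul]

lemma fibSum_zero (m : ℕ) : fibSum x u 0 m = u m := by
  simp [fibSum]

lemma fibSum_one (m : ℕ) : fibSum x u 1 m = u m := by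
  simp [fibSum, Nat.antidiagonal_succ]

lemma fibSum_add_two (N m : ℕ) :
    fibSum x u (N + 2) m = fibSum x u (N + 1) m + x * fibSum x u N (m + 1) := by
  have pascal (p : ℕ × ℕ) :
      ((p.2 + 1).choose (p.1 + 1) : R) * x ^ (p.1 + 1) * u (m + (p.1 + 1)) =
        (p.2.choose (p.1 + 1) : R) * x ^ (p.1 + 1) * u (m + (p.1 + 1)) +
          x * ((p.2.choose p.1 : R) * x ^ p.1 * u (m + 1 + p.1)) := by
    rw [Nat.choose_succ_succ', add_assoc m 1, add_comm 1]
    push_cast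
    ring
  simp only [fibSum, Nat.antidiagonal_succ_succ', Nat.antidiagonal_succ (n := N), sum_cons,
    sum_map, Function.Embedding.prodMap, Function.Embedding.coeFn_mk, Prod.map,
    Function.Embedding.refl_apply, Nat.succ_eq_add_one, pascal, sum_add_distrib, mul_sum]
  simp [add_assoc]

lemma fibSum_add_four (N m : ℕ) :
    fibSum x u (N + 4) m + x ^ 2 * fibSum x u N (m + 2) =
      fibSum x u (N + 2) m + 2 * x * fibSum x u (N + 2) (m + 1) := by
  rw [fibSum_add_two x u (N + 2), fibSum_add_two x u (N + 1), fibSum_add_two x u N (m + 1)]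
  ring

lemma sum_Icc_choose_pred_eq_mul_fibSum (m n : ℕ) :
    ∑ k ∈ Icc 1 (n + 1), ((2 * (n + 1) - k - 1).choose (k - 1) : R) * x ^ k * u (m + k) =
      x * fibSum x u (2 * n) (m + 1) := by
  rw [fibSum_eq_sum_range, Nat.mul_div_cancel_left n two_pos, mul_sum,
    ← Ico_add_one_right_eq_Icc, sum_Ico_eq_sum_range]
  refine sum_congr rfl fun k _ ↦ ?_
  rw [show 2 * (n + 1) - (1 + k) - 1 = 2 * n - k by omega, Nat.add_sub_cancel_left, add_assoc m]
  ring

end CommSemiring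

section CommRing

variable {R : Type*} [CommRing R] {x : R} {u : ℕ → R}

lemma fibSum_add_two_add_mul_fibSum
    (hu : ∀ j, u (j + 2) = 2 * x * u (j + 1) + (1 - x ^ 2) * u j) (m n : ℕ) :
    fibSum x u (2 * n + 2) m + x * fibSum x u (2 * n) (m + 1) =
      x ^ (2 * n + 2) * u m + u (m + 2 * n + 2) := by
  induction n using Nat.twoStepInduction generalizing m with
  | zero =>
    simp only [mul_zero, fibSum_add_two, fibSum_zero, fibSum_one, hu, add_zero, zero_add]
    ring
  | one =>
    simp only [mul_one, fibSum_add_two, fibSum_zero, fibSum_one, hu, zero_add]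
    ring
  | more n ih ih' =>
    have sum_recurrence :
        fibSum x u (2 * n + 6) m + x * fibSum x u (2 * n + 4) (m + 1) =
          (fibSum x u (2 * n + 4) m + x * fibSum x u (2 * n + 2) (m + 1)) +
            2 * x * (fibSum x u (2 * n + 4) (m + 1) + x * fibSum x u (2 * n + 2) (m + 2)) -
            x ^ 2 * (fibSum x u (2 * n + 2) (m + 2) + x * fibSum x u (2 * n) (m + 3)) := by
      linear_combination fibSum_add_four x u (2 * n + 2) m +
        x * fibSum_add_four x u (2 * n) (m + 1)
    have power_recurrence :
        x ^ (2 * n + 6) * u m + u (m + 2 * n + 6) =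
          (x ^ (2 * n + 4) * u m + u (m + 2 * n + 4)) +
            2 * x * (x ^ (2 * n + 4) * u (m + 1) + u (m + 2 * n + 5)) -
            x ^ 2 * (x ^ (2 * n + 2) * u (m + 2) + u (m + 2 * n + 4)) := by
      linear_combination x ^ (2 * n + 4) * hu m + hu (m + 2 * n + 4)
    linear_combination (norm := ring_nf) sum_recurrence - power_recurrence +
      ih' m + 2 * x * ih' (m + 1) - x ^ 2 * ih (m + 2)

theorem stmt_9_general (hu : ∀ j, u (j + 2) = 2 * x * u (j + 1) + (1 - x ^ 2) * u j) (m n : ℕ) :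
    x ^ (2 * n) * u m + u (m + 2 * n) =
      (∑ k ∈ range (n + 1), ((2 * n - k).choose k : R) * x ^ k * u (m + k)) +
        (∑ k ∈ Icc 1 n, ((2 * n - k - 1).choose (k - 1) : R) * x ^ k * u (m + k)) +
        (if n = 0 then u m else 0) := by
  rcases n with _ | n
  · simp
  have first := fibSum_eq_sum_range x u (2 * (n + 1)) m
  rw [Nat.mul_div_cancel_left _ two_pos] at first
  rw [← first, sum_Icc_choose_pred_eq_mul_fibSum, if_neg n.succ_ne_zero, add_zero]
  exact (fibSum_add_two_add_mul_fibSum hu m n).symm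

end CommRing

lemma A_add_two (x : ℚ) (j : ℕ) : A (j + 2) x = 2 * x * A (j + 1) x + (1 - x ^ 2) * A j x := by
  unfold A
  ring

theorem stmt_9 (m n : ℕ) (x : ℚ) :
    x ^ (2 * n) * A m x + A (m + 2 * n) x =
      (∑ k ∈ Finset.range (n + 1), ((2 * n - k).choose k : ℚ) * x ^ k * A (m + k) x) +
        (∑ k ∈ Finset.Icc 1 n, ((2 * n - k - 1).choose (k - 1) : ℚ) * x ^ k * A (m + k) x) +
        (if n = 0 then A m x else 0) :=
  stmt_9_general (u := (A · x)) (A_add_two x) m n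
end

section
/- For every nonnegative integer n and every rational number x, one has S_n(x) − S_n(x−1) = S_{n−1}(x−1), where S_n(t) := Σ_{m=0}^{n} B(t−m, m) · C(m, n−m) for n ≥ 0 and S_n(t) := 0 for n < 0, B(t,k) is the generalized binomial coefficient t(t−1)⋯(t−k+1)/k!, and C(a,b) is the ordinary binomial coefficient of nonnegative integers. -/
/-- `S n t = ∑_{m=0}^{n} B(t - m, m) * C(m, n - m)` for `n ≥ 0`, and `0` for `n < 0`. -/
noncomputable def S (n : ℤ) (t : ℚ) : ℚ :=
  if 0 ≤ n then
    ∑ m ∈ Finset.range (n.toNat + 1), Ring.choose (t - m) m * (m.choose (n.toNat - m) : ℚ)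
  else 0

/-!
Let `G_t(y) = ∑ B(t - m, m) y^m`. Pascal's rule gives `G_t = G_{t-1} + y G_{t-2}`, and the
generating function of `n ↦ S n t` is `F_t(z) = G_t(z(1 + z))`. The characteristic polynomial of
the recurrence for `F` factors: `λ² - λ - z(1 + z) = (λ - (1 + z))(λ + z)`. Hence
`E_t = F_t - (1 + z) F_{t-1}` satisfies `E_t = -z E_{t-1}`, so it is divisible by every power
of `z` and vanishes. Comparing coefficients in `F_t = (1 + z) F_{t-1}` gives the theorem.
-/

section PowerSeries

open PowerSeries

theorem eq_zero_of_forall_X_mul_dvd {R ι : Type*} [Semiring R] {f : ι → R⟦X⟧} {σ : ι → ι}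
    (h : ∀ i, X * f (σ i) ∣ f i) (i : ι) : f i = 0 := by
  have X_pow_dvd (n : ℕ) : ∀ i, X ^ n ∣ f i := by
    induction n with
    | zero => simp
    | succ n ih =>
      intro i
      rw [pow_succ']
      exact (mul_dvd_mul_left X (ih (σ i))).trans (h i)
  ext n
  exact X_pow_dvd_iff.mp (X_pow_dvd (n + 1) i) n n.lt_succ_self

variable {R : Type*} [CommRing R]

theorem hasSubst_X_mul_one_add_X : HasSubst (X * (1 + X) : R⟦X⟧) :=
  .of_constantCoeff_zero' (by simp)

theorem coeff_X_mul_one_add_X_pow (m n : ℕ) :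
    coeff n ((X * (1 + X) : R⟦X⟧) ^ m) = if m ≤ n then (m.choose (n - m) : R) else 0 := by
  rw [mul_pow, coeff_X_pow_mul', ← binomialSeries_nat (R := ℤ), binomialSeries_coeff,
    Ring.choose_natCast]
  simp

theorem coeff_subst_X_mul_one_add_X (f : R⟦X⟧) (n : ℕ) :
    coeff n (f.subst (X * (1 + X) : R⟦X⟧)) =
      ∑ m ∈ Finset.range (n + 1), coeff m f * (m.choose (n - m) : R) := by
  simp only [coeff_subst' hasSubst_X_mul_one_add_X, coeff_X_mul_one_add_X_pow, smul_eq_mul]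
  rw [finsum_eq_sum_of_support_subset (s := Finset.range (n + 1))]
  · refine Finset.sum_congr rfl fun m hm => ?_
    rw [if_pos (Finset.mem_range_succ_iff.mp hm)]
  · intro m hm
    contrapose! hm
    simp_all

variable [BinomialRing R]

/-- The power series `G_t(y) = ∑ B(t - m, m) y^m` of binomial coefficients along a diagonal. -/
noncomputable def diagonalChooseSeries (t : R) : R⟦X⟧ :=
  mk fun m => Ring.choose (t - m) m

/-- The generating function `F_t(z) = G_t(z(1 + z))`, which for `R = ℚ` is that of `n ↦ S n t`. -/
noncomputable def diagonalSumSeries (t : R) : R⟦X⟧ :=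
  (diagonalChooseSeries t).subst (X * (1 + X) : R⟦X⟧)

theorem coeff_diagonalSumSeries (n : ℕ) (t : R) :
    coeff n (diagonalSumSeries t) =
      ∑ m ∈ Finset.range (n + 1), Ring.choose (t - m) m * (m.choose (n - m) : R) := by
  simp only [diagonalSumSeries, coeff_subst_X_mul_one_add_X, diagonalChooseSeries, coeff_mk]

theorem diagonalChooseSeries_eq_add (t : R) :
    diagonalChooseSeries t =
      diagonalChooseSeries (t - 1) + X * diagonalChooseSeries (t - 2) := by
  ext (_ | m)
  · simp [diagonalChooseSeries]
  · have shift : t - (m + 1 : ℕ) = t - 2 - m + 1 := by push_cast; ring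
    have shift' : t - 1 - (m + 1 : ℕ) = t - 2 - m := by push_cast; ring
    simp only [diagonalChooseSeries, map_add, coeff_succ_X_mul, coeff_mk]
    rw [shift, shift', Ring.choose_succ_succ, add_comm]

theorem diagonalSumSeries_eq_add (t : R) :
    diagonalSumSeries t = diagonalSumSeries (t - 1) + X * (1 + X) * diagonalSumSeries (t - 2) := by
  have hs := hasSubst_X_mul_one_add_X (R := R)
  rw [diagonalSumSeries, diagonalChooseSeries_eq_add, subst_add hs, subst_mul hs, subst_X hs]
  rfl

theorem diagonalSumSeries_eq_one_add_X_mul (t : R) :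
    diagonalSumSeries t = (1 + X) * diagonalSumSeries (t - 1) := by
  refine sub_eq_zero.mp <| eq_zero_of_forall_X_mul_dvd
    (f := fun s : R => diagonalSumSeries s - (1 + X) * diagonalSumSeries (s - 1))
    (σ := (· - 1)) (fun s => ?_) t
  have defect_eq : diagonalSumSeries s - (1 + X) * diagonalSumSeries (s - 1) =
      -(X * (diagonalSumSeries (s - 1) - (1 + X) * diagonalSumSeries (s - 1 - 1))) := by
    rw [diagonalSumSeries_eq_add s, show s - 1 - 1 = s - 2 by ring]
    ring
  exact defect_eq ▸ dvd_neg.mpr dvd_rfl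

theorem stmt_14_general (t : R) :
    diagonalSumSeries t - diagonalSumSeries (t - 1) = X * diagonalSumSeries (t - 1) := by
  rw [diagonalSumSeries_eq_one_add_X_mul t]
  ring

theorem S_natCast (n : ℕ) (t : ℚ) : S n t = coeff n (diagonalSumSeries t) := by
  simp [S, coeff_diagonalSumSeries]

theorem S_natCast_sub_one (n : ℕ) (t : ℚ) :
    S ((n : ℤ) - 1) t = coeff n (X * diagonalSumSeries t) := by
  cases n with
  | zero => simp [S]
  | succ n => rw [coeff_succ_X_mul, ← S_natCast, Nat.cast_succ, add_sub_cancel_right]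

end PowerSeries

theorem stmt_14 (n : ℕ) (x : ℚ) :
    S n x - S n (x - 1) = S ((n : ℤ) - 1) (x - 1) := by
  rw [S_natCast, S_natCast, S_natCast_sub_one, ← map_sub, stmt_14_general]
end

section
/- For every positive integer n and all rational numbers x and y, one has Σ_{m=1}^{n} B(x−m, m−1) · B(y+m, n−m) = S_{n−1}(x+y), where S_k(t) := Σ_{m=0}^{k} B(t−m, m) · C(m, k−m), B(t,k) is the generalized binomial coefficient t(t−1)⋯(t−k+1)/k!, and C(a,b) is the ordinary binomial coefficient of nonnegative integers. -/
/-!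
Vandermonde's identity expands the slanted sum `F N a b = ∑_{m + k = N} B(a - m, m) B(b + m, k)`
under a translation by `c` of either argument:
`F N (a + c) b = ∑_{i + j = N} B(c, i) F j (a - i) (b + i)` and
`F N a (b + c) = ∑_{i + j = N} B(c, i) F j a b`.
The terms with `i = 0` agree, and those with `i > 0` involve only `F j` with `j < N`. By strong
induction on `N`, `F N a b` depends only on `a + b`, and `F N t 0` is the sum `S_N(t)`.
-/

open Finset

section Antidiagonal

variable {A M : Type*} [AddCommMonoid A] [HasAntidiagonal A] [AddCommMonoid M]

theorem sum_antidiagonal_assoc (f : A → A → A → M) (n : A) :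
    ∑ p ∈ antidiagonal n, ∑ q ∈ antidiagonal p.1, f q.1 q.2 p.2 =
      ∑ p ∈ antidiagonal n, ∑ q ∈ antidiagonal p.2, f p.1 q.1 q.2 := by
  simp only [sum_sigma']
  refine sum_nbij' (fun s => ⟨(s.2.1, s.2.2 + s.1.2), (s.2.2, s.1.2)⟩)
    (fun s => ⟨(s.1.1 + s.2.1, s.2.2), (s.1.1, s.2.1)⟩) ?_ ?_ ?_ ?_ ?_
  · rintro ⟨⟨m, k⟩, ⟨i, j⟩⟩
    simp +contextual [← add_assoc]
  all_goals simp +contextual [add_assoc]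

theorem sum_antidiagonal_left_comm (f : A → A → A → M) (n : A) :
    ∑ p ∈ antidiagonal n, ∑ q ∈ antidiagonal p.2, f p.1 q.1 q.2 =
      ∑ p ∈ antidiagonal n, ∑ q ∈ antidiagonal p.2, f q.1 p.1 q.2 := by
  simp only [sum_sigma']
  refine sum_nbij' (fun s => ⟨(s.2.1, s.1.1 + s.2.2), (s.1.1, s.2.2)⟩)
    (fun s => ⟨(s.2.1, s.1.1 + s.2.2), (s.1.1, s.2.2)⟩) ?_ ?_ ?_ ?_ ?_ <;>
    simp +contextual [add_left_comm]

end Antidiagonal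

section BinomialRing

variable {R : Type*} [CommRing R] [BinomialRing R]

/-- The Vandermonde convolution `∑_{m + k = N} B(a - m, m) B(b + m, k)`, slanted in that the upper
arguments move with the summation index. -/
def slantedVandermonde (N : ℕ) (a b : R) : R :=
  ∑ p ∈ antidiagonal N, Ring.choose (a - p.1) p.1 * Ring.choose (b + p.1) p.2

theorem slantedVandermonde_add_left (N : ℕ) (a b c : R) :
    slantedVandermonde N (a + c) b =
      ∑ p ∈ antidiagonal N, Ring.choose c p.1 * slantedVandermonde p.2 (a - p.1) (b + p.1) := by
  calc
    _ = ∑ p ∈ antidiagonal N, ∑ q ∈ antidiagonal p.1, Ring.choose c q.1 *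
          (Ring.choose (a - (q.1 + q.2 : ℕ)) q.2 * Ring.choose (b + (q.1 + q.2 : ℕ)) p.2) := by
      refine sum_congr rfl fun p _ => ?_
      rw [add_comm a c, add_sub_assoc, Ring.add_choose_eq _ (Commute.all _ _), sum_mul]
      refine sum_congr rfl fun q hq => ?_
      rw [HasAntidiagonal.mem_antidiagonal.mp hq, mul_assoc]
    _ = _ := by
      rw [sum_antidiagonal_assoc fun i j k => Ring.choose c i *
        (Ring.choose (a - (i + j : ℕ)) j * Ring.choose (b + (i + j : ℕ)) k)]
      simp only [slantedVandermonde, mul_sum, Nat.cast_add, sub_sub, add_assoc]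

theorem slantedVandermonde_add_right (N : ℕ) (a b c : R) :
    slantedVandermonde N a (b + c) =
      ∑ p ∈ antidiagonal N, Ring.choose c p.1 * slantedVandermonde p.2 a b := by
  calc
    _ = ∑ p ∈ antidiagonal N, ∑ q ∈ antidiagonal p.2, Ring.choose c q.1 *
          (Ring.choose (a - p.1) p.1 * Ring.choose (b + p.1) q.2) := by
      refine sum_congr rfl fun p _ => ?_
      rw [add_comm b c, add_assoc, Ring.add_choose_eq _ (Commute.all _ _), mul_sum]
      exact sum_congr rfl fun q _ => mul_left_comm _ _ _
    _ = _ := by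
      rw [sum_antidiagonal_left_comm fun m i k => Ring.choose c i *
        (Ring.choose (a - m) m * Ring.choose (b + m) k)]
      simp only [slantedVandermonde, mul_sum]

theorem slantedVandermonde_add_left_eq_add_right (N : ℕ) (a b c : R) :
    slantedVandermonde N (a + c) b = slantedVandermonde N a (b + c) := by
  induction N using Nat.strong_induction_on generalizing a b c with
  | _ N ih =>
    rw [slantedVandermonde_add_left, slantedVandermonde_add_right]
    refine sum_congr rfl fun ⟨i, j⟩ hij => congrArg (Ring.choose c i * ·) ?_
    rcases i.eq_zero_or_pos with rfl | hi
    · simp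
    · have hj : j < N := by rw [HasAntidiagonal.mem_antidiagonal] at hij; omega
      simpa using (ih j hj (a - i) b i).symm

theorem slantedVandermonde_zero_right (N : ℕ) (t : R) :
    slantedVandermonde N t 0 =
      ∑ m ∈ range (N + 1), Ring.choose (t - m) m * (m.choose (N - m) : R) := by
  simp only [slantedVandermonde, Nat.sum_antidiagonal_eq_sum_range_succ_mk, zero_add,
    Ring.choose_natCast]

theorem sum_Icc_choose_mul_choose_eq_slantedVandermonde (N : ℕ) (x y : R) :
    ∑ m ∈ Icc 1 (N + 1), Ring.choose (x - m) (m - 1) * Ring.choose (y + m) (N + 1 - m) =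
      slantedVandermonde N (x - 1) (y + 1) := by
  rw [slantedVandermonde, Nat.sum_antidiagonal_eq_sum_range_succ_mk, range_eq_Ico,
    ← Ico_add_one_right_eq_Icc, ← sum_Ico_add' _ 0 (N + 1) 1]
  refine sum_congr rfl fun m _ => ?_
  rw [Nat.add_sub_cancel, Nat.add_sub_add_right, Nat.cast_add_one, sub_sub, add_assoc y, add_comm 1]

theorem stmt_16_general (n : ℕ) (x y : R) :
    ∑ m ∈ Icc 1 n, Ring.choose (x - m) (m - 1) * Ring.choose (y + m) (n - m) =
      ∑ m ∈ range n, Ring.choose (x + y - m) m * (m.choose (n - 1 - m) : R) := by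
  rcases n with _ | N
  · simp
  · calc
      _ = slantedVandermonde N (x - 1) (0 + (y + 1)) := by
        rw [sum_Icc_choose_mul_choose_eq_slantedVandermonde, zero_add]
      _ = slantedVandermonde N (x + y) 0 := by
        rw [← slantedVandermonde_add_left_eq_add_right, sub_add_add_cancel]
      _ = _ := slantedVandermonde_zero_right N (x + y)

end BinomialRing

theorem stmt_16 (n : ℕ) (hn : 0 < n) (x y : ℚ) :
    ∑ m ∈ Finset.Icc 1 n, Ring.choose (x - m) (m - 1) * Ring.choose (y + m) (n - m) =
      ∑ m ∈ Finset.range n, Ring.choose (x + y - m) m * (m.choose (n - 1 - m) : ℚ) :=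
  stmt_16_general n x y
end
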